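/- Let k be a fixed positive integer, let A<1 be a fixed constant, and let m:ℕ→ℕ satisfy m(n) ≤ An for all n. Then limsup_{n→∞} of the probability that P_{n,m(n)} contains a cycle of length at most k is strictly less than 1. -/

import Mathlib

/-!
The proof compares numbers of graphs by deleting edges and adding edges between components.

Suppose a class `Q` of graphs on `n` vertices is closed under adding an edge between two different
components. A graph with fewer than `m ≤ A n` edges has, for each vertex `v`, at least
`n - m ≥ (1 - A) n` vertices not reachable from `v`, hence at least `(1 - A) n²` ordered pairs along
which an edge can be added. Conversely a graph with `m` edges arises from at most `2 m ≤ 2 n`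
(graph, ordered pair) choices. So with `q = 2 / (1 - A)`, the number of graphs in `Q` with
`m - j` edges is at most `(q / n) ^ j` times the number with `m` edges (`card_graphsWith_iter`).
This applies to planar graphs, because `K₅` and `K₃,₃` are connected enough that a bridge never
helps to form them as minors (`isMinor_of_bridge`), and to planar graphs without short cycles,
because a bridge lies on no cycle.

Deleting a fixed edge set `S` therefore shows that `P_{n,m}` contains `S` with probability at most
`(q / n) ^ |S|` (`card_containing`). The edge set of an `r`-cycle has `r` edges and touches `r`
vertices; there are `O(n ^ r)` such sets, so the expected number of edges on cycles of length at
most `k` is bounded by a constant (`sum_card_shortEdges_le`), and by Markov's inequality at least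
half of the planar graphs have at most `T` such edges for a suitable constant `T`.

Finally let `Y` be the set of all edges of `G` on short cycles. Deleting `Y` leaves a planar graph
without short cycles. Every vertex touched by `Y` has degree at least two in `Y`, so `Y` touches at
most `|Y|` vertices and there are `O(n ^ |Y|)` candidates for `Y`. This cancels the factor
`(q / n) ^ |Y|` gained from adding `|Y|` edges back between components, whence graphs with
`|Y| ≤ T` are at most a constant times as many as those without short cycles
(`card_few_shortEdges_le`).
-/

open SimpleGraph Filter Asymptotics

/-- `H` is a minor of `G`: to each vertex of `H` we can assign a connected nonempty
branch set in `G`, pairwise disjoint, with an edge of `G` between the branch sets of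
any two adjacent vertices of `H`. -/
def IsMinor {α β : Type*} (H : SimpleGraph α) (G : SimpleGraph β) : Prop :=
  ∃ f : α → Set β,
    (∀ a, (G.induce (f a)).Connected) ∧
    (∀ a b, a ≠ b → Disjoint (f a) (f b)) ∧
    (∀ a b, H.Adj a b → ∃ u ∈ f a, ∃ v ∈ f b, G.Adj u v)

/-- A graph is planar iff it has neither a `K₅`-minor nor a `K₃,₃`-minor
(Wagner's theorem). -/
def IsPlanar {V : Type*} (G : SimpleGraph V) : Prop :=
  ¬ IsMinor (completeGraph (Fin 5)) G ∧
    ¬ IsMinor (completeBipartiteGraph (Fin 3) (Fin 3)) G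

/-- The number of edges of a graph. -/
noncomputable def edgeCount {V : Type*} (G : SimpleGraph V) : ℕ :=
  G.edgeSet.ncard

/-- The degree of a vertex. -/
noncomputable def vertexDegree {V : Type*} (G : SimpleGraph V) (v : V) : ℕ :=
  (G.neighborSet v).ncard

/-- `𝒫(n,m)`: the set of labelled planar graphs on `{1,…,n}` with exactly `m` edges. -/
def planarSet (n m : ℕ) : Set (SimpleGraph (Fin n)) :=
  {G | IsPlanar G ∧ edgeCount G = m}

/-- The probability that the uniform random planar graph `P_{n,m}` satisfies `P`. -/
noncomputable def planarProb (n m : ℕ) (P : SimpleGraph (Fin n) → Prop) : ℝ :=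
  ({G ∈ planarSet n m | P G}.ncard : ℝ) / ((planarSet n m).ncard : ℝ)

/-- The number of pendant edges (edges incident to a vertex of degree 1). -/
noncomputable def pendantCount {V : Type*} (G : SimpleGraph V) : ℕ :=
  {e ∈ G.edgeSet | ∃ v ∈ e, vertexDegree G v = 1}.ncard

/-- The set of addable non-edges of `G`: non-edges whose addition keeps the graph planar. -/
def addableSet {V : Type*} (G : SimpleGraph V) : Set (Sym2 V) :=
  {e | ¬ e.IsDiag ∧ e ∉ G.edgeSet ∧ IsPlanar (G ⊔ SimpleGraph.fromEdgeSet {e})}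

/-- `add(n,m)`: the minimum number of addable non-edges over all graphs in `𝒫(n,m)`. -/
noncomputable def addMin (n m : ℕ) : ℕ :=
  sInf ((fun G => (addableSet G).ncard) '' planarSet n m)

/-- `W` carries an induced order-preserving copy of `H` in `G`: the increasing bijection
from `{1,…,h}` to `W` is an isomorphism between `H` and the induced subgraph `G[W]`. -/
def IsOrderCopy {h n : ℕ} (H : SimpleGraph (Fin h)) (G : SimpleGraph (Fin n))
    (W : Finset (Fin n)) : Prop :=
  ∃ hW : W.card = h,
    ∀ i j : Fin h,
      H.Adj i j ↔ G.Adj ((W.orderIsoOfFin hW i : Fin n)) ((W.orderIsoOfFin hW j : Fin n))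

/-- `W` is the vertex set of a connected component of `G`. -/
def IsComponent {V : Type*} (G : SimpleGraph V) (W : Finset V) : Prop :=
  (G.induce (W : Set V)).Connected ∧ ∀ v ∈ W, ∀ u, G.Adj v u → u ∈ W

/-- The number of components of `G` admitting an order-preserving isomorphism to `H`. -/
noncomputable def numOrderComponents {h n : ℕ} (H : SimpleGraph (Fin h))
    (G : SimpleGraph (Fin n)) : ℕ :=
  {W : Finset (Fin n) | IsComponent G W ∧ IsOrderCopy H G W}.ncard

/-- The number of distinct cycles (as subgraphs, identified with their edge sets) of
length at most `k` in `S`. -/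
noncomputable def cycleCountLe {V : Type*} (S : SimpleGraph V) (k : ℕ) : ℕ :=
  {E : Set (Sym2 V) | ∃ (v : V) (c : S.Walk v v),
    c.IsCycle ∧ c.length ≤ k ∧ {e | e ∈ c.edges} = E}.ncard

/-! ### Bridges and minors -/

section Bridge

variable {α β : Type*} {H : SimpleGraph α} {G G' : SimpleGraph β} {C : Set β} {u v : β}

/-- A connected branch set meeting both sides of the cut `C` uses the only crossing edge `uv`. -/
lemma crossing_mem
    (hG : ∀ x y, G'.Adj x y → G.Adj x y ∨ (x = u ∧ y = v) ∨ (x = v ∧ y = u))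
    (hC : ∀ x y, G.Adj x y → (x ∈ C ↔ y ∈ C)) (hv : v ∉ C)
    {s : Set β} (hs : (G'.induce s).Connected) {x y : β} (hx : x ∈ s) (hxC : x ∈ C)
    (hy : y ∈ s) (hyC : y ∉ C) : u ∈ s ∧ v ∈ s := by
  obtain ⟨p⟩ := hs.preconnected ⟨x, hx⟩ ⟨y, hy⟩
  obtain ⟨d, -, hd1, hd2⟩ := p.exists_boundary_dart {z | (z : β) ∈ C} hxC hyC
  have hadj : G'.Adj (d.fst : β) (d.snd : β) := d.adj
  simp only [Set.mem_ofPred_eq] at hd1 hd2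
  rcases hG _ _ hadj with h | ⟨h1, h2⟩ | ⟨h1, h2⟩
  · exact absurd ((hC _ _ h).1 hd1) hd2
  · exact ⟨h1 ▸ d.fst.2, h2 ▸ d.snd.2⟩
  · exact absurd (h1 ▸ hd1) hv

/-- Collapsing the far side of a bridge `uv` onto `u` maps walks to walks, so the trace of a
connected set on one side of the bridge is connected. -/
lemma connected_inter_side (hu : u ∈ C)
    (hG : ∀ x y, G'.Adj x y → G.Adj x y ∨ (x = u ∧ y = v) ∨ (x = v ∧ y = u))
    (hC : ∀ x y, G.Adj x y → (x ∈ C ↔ y ∈ C)) (hv : v ∉ C)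
    {s : Set β} (hs : (G'.induce s).Connected) (hne : (s ∩ C).Nonempty) :
    (G.induce (s ∩ C)).Connected := by
  have key : ∀ x y : s, (G'.induce s).Walk x y → ∀ p q : (s ∩ C : Set β),
      ((p : β) = x ∨ ((x : β) ∉ C ∧ (p : β) = u)) →
      ((q : β) = y ∨ ((y : β) ∉ C ∧ (q : β) = u)) → (G.induce (s ∩ C)).Reachable p q := by
    intro x y w
    induction w with
    | nil =>
      rename_i x
      intro p q hp hq
      have : p = q := by
        apply Subtype.ext
        rcases hp with hp | ⟨hp, hp'⟩ <;> rcases hq with hq | ⟨hq, hq'⟩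
        · rw [hp, hq]
        · exact absurd (hp ▸ p.2.2) hq
        · exact absurd (hq ▸ q.2.2) hp
        · rw [hp', hq']
      rw [this]
    | @cons x z y hxz w ih =>
      intro p q hp hq
      have hadj : G'.Adj (x : β) (z : β) := hxz
      by_cases hxC : (x : β) ∈ C
      · have hpx : (p : β) = x := by
          rcases hp with hp | hp
          · exact hp
          · exact absurd hxC hp.1
        rcases hG _ _ hadj with h | ⟨h1, h2⟩ | ⟨h1, h2⟩
        · have hzC := (hC _ _ h).1 hxC
          refine Reachable.trans ?_ (ih ⟨z, z.2, hzC⟩ q (Or.inl rfl) hq)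
          refine Adj.reachable ?_
          change G.Adj (p : β) (z : β)
          rw [hpx]; exact h
        · exact ih p q (Or.inr ⟨h2 ▸ hv, hpx.trans h1⟩) hq
        · exact absurd (h1 ▸ hxC) hv
      · have hpu : (p : β) = u := by
          rcases hp with hp | hp
          · exact absurd (hp ▸ p.2.2) hxC
          · exact hp.2
        rcases hG _ _ hadj with h | ⟨h1, h2⟩ | ⟨h1, h2⟩
        · exact ih p q (Or.inr ⟨fun hz => hxC ((hC _ _ h).2 hz), hpu⟩) hq
        · exact absurd (h1 ▸ hu) hxC
        · exact ih p q (Or.inl (hpu.trans h2.symm)) hq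
  have : Nonempty (s ∩ C : Set β) := hne.to_subtype
  refine Connected.mk fun p q => ?_
  obtain ⟨w⟩ := hs.preconnected ⟨p, p.2.1⟩ ⟨q, q.2.1⟩
  exact key _ _ w p q (Or.inl rfl) (Or.inl rfl)

/-- If every branch set of a minor model meets the side `C` of the bridge, then the traces on `C`
form a model avoiding the bridge. -/
lemma isMinor_of_all_meet (hu : u ∈ C)
    (hG : ∀ x y, G'.Adj x y → G.Adj x y ∨ (x = u ∧ y = v) ∨ (x = v ∧ y = u))
    (hC : ∀ x y, G.Adj x y → (x ∈ C ↔ y ∈ C)) (hv : v ∉ C) (f : α → Set β)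
    (hf1 : ∀ a, (G'.induce (f a)).Connected)
    (hf2 : ∀ a b, a ≠ b → Disjoint (f a) (f b))
    (hf3 : ∀ a b, H.Adj a b → ∃ x ∈ f a, ∃ y ∈ f b, G'.Adj x y)
    (hm : ∀ a, (f a ∩ C).Nonempty) : IsMinor H G := by
  refine ⟨fun a => f a ∩ C, fun a => connected_inter_side hu hG hC hv (hf1 a) (hm a),
    fun a b hab => (hf2 a b hab).mono Set.inter_subset_left Set.inter_subset_left, ?_⟩
  intro a b hab
  obtain ⟨x, hx, y, hy, hxy⟩ := hf3 a b hab
  have hd := Set.disjoint_left.1 (hf2 a b hab.ne)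
  -- a branch set with a vertex outside `C` contains both ends of the bridge
  have hout : ∀ c, ∀ z ∈ f c, z ∉ C → u ∈ f c ∧ v ∈ f c := by
    intro c z hz hzC
    obtain ⟨t, ht, htC⟩ := hm c
    exact crossing_mem hG hC hv (hf1 c) ht htC hz hzC
  by_cases hxC : x ∈ C <;> by_cases hyC : y ∈ C
  · refine ⟨x, ⟨hx, hxC⟩, y, ⟨hy, hyC⟩, ?_⟩
    rcases hG _ _ hxy with h | ⟨h1, h2⟩ | ⟨h1, h2⟩
    · exact h
    · exact absurd (h2 ▸ hyC) hv
    · exact absurd (h1 ▸ hxC) hv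
  · rcases hG _ _ hxy with h | ⟨h1, h2⟩ | ⟨h1, h2⟩
    · exact absurd ((hC _ _ h).1 hxC) hyC
    · exact absurd (hout b y hy hyC).1 (hd (h1 ▸ hx))
    · exact absurd (h1 ▸ hxC) hv
  · rcases hG _ _ hxy with h | ⟨h1, h2⟩ | ⟨h1, h2⟩
    · exact absurd ((hC _ _ h).2 hyC) hxC
    · exact absurd (h2 ▸ hyC) hv
    · exact absurd (h2 ▸ hy) (hd (hout a x hx hxC).1)
  · exact absurd (hout b y hy hyC).1 (hd (hout a x hx hxC).1)

/-- A connectivity condition on `H`, satisfied by `K₅` and `K₃,₃`, under which a bridge is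
useless for a model of `H`: any two vertices are joined by an edge or by a path of length two
avoiding a prescribed vertex, and all degrees are at least two. -/
def Robust (H : SimpleGraph α) : Prop :=
  (∀ x y p, x ≠ y → H.Adj x y ∨ ∃ z, z ≠ p ∧ H.Adj x z ∧ H.Adj z y) ∧
    ∀ p, ∃ x y, x ≠ y ∧ H.Adj p x ∧ H.Adj p y

/-- A graph `G'` that arises from `G` by adding a bridge `uv` across the cut `C` has no robust minor
that `G` lacks. A model with one branch set inside `C` and another one outside `C` is impossible,
since `H` would have to be disconnected by one edge or one vertex; otherwise all branch sets meet
a common side. -/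
lemma isMinor_of_bridge (hH : Robust H) (hu : u ∈ C)
    (hG : ∀ x y, G'.Adj x y → G.Adj x y ∨ (x = u ∧ y = v) ∨ (x = v ∧ y = u))
    (hC : ∀ x y, G.Adj x y → (x ∈ C ↔ y ∈ C)) (hv : v ∉ C) (h : IsMinor H G') :
    IsMinor H G := by
  obtain ⟨f, hf1, hf2, hf3⟩ := h
  by_cases hm : ∀ a, (f a ∩ C).Nonempty
  · exact isMinor_of_all_meet hu hG hC hv f hf1 hf2 hf3 hm
  by_cases hm' : ∀ a, (f a ∩ Cᶜ).Nonempty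
  · refine isMinor_of_all_meet (C := Cᶜ) (u := v) (v := u) hv ?_ ?_ (fun h => h hu)
      f hf1 hf2 hf3 hm'
    · intro x y hxy
      rcases hG _ _ hxy with h | h | h
      · exact Or.inl h
      · exact Or.inr (Or.inr h)
      · exact Or.inr (Or.inl h)
    · intro x y hxy
      exact not_congr (hC x y hxy)
  exfalso
  push Not at hm hm'
  obtain ⟨b, hb⟩ := hm
  obtain ⟨a, ha⟩ := hm'
  have hb : ∀ z ∈ f b, z ∉ C := fun z hz hzC => by
    have : z ∈ f b ∩ C := ⟨hz, hzC⟩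
    rw [hb] at this; exact this
  have ha : ∀ z ∈ f a, z ∈ C := fun z hz => by
    by_contra hzC
    have : z ∈ f a ∩ Cᶜ := ⟨hz, hzC⟩
    rw [ha] at this; exact this
  -- an edge from a branch set inside `C` to one outside `C` must be the bridge
  have cross : ∀ c d, (∀ z ∈ f c, z ∈ C) → (∀ z ∈ f d, z ∉ C) → H.Adj c d →
      u ∈ f c ∧ v ∈ f d := by
    intro c d hc hd hcd
    obtain ⟨x, hx, y, hy, hxy⟩ := hf3 c d hcd
    rcases hG _ _ hxy with h | ⟨h1, h2⟩ | ⟨h1, h2⟩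
    · exact absurd ((hC _ _ h).1 (hc x hx)) (hd y hy)
    · exact ⟨h1 ▸ hx, h2 ▸ hy⟩
    · exact absurd (h1 ▸ hc x hx) hv
  have pure : ∀ c, (u ∉ f c ∨ v ∉ f c) → (∀ z ∈ f c, z ∈ C) ∨ (∀ z ∈ f c, z ∉ C) := by
    intro c hcu
    by_contra hcon
    push Not at hcon
    obtain ⟨⟨y, hy, hyC⟩, x, hx, hxC⟩ := hcon
    have := crossing_mem hG hC hv (hf1 c) hx hxC hy hyC
    tauto
  have huniq : ∀ z : β, ∀ c d, z ∈ f c → z ∈ f d → c = d := by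
    intro z c d hc hd
    by_contra hcd
    exact Set.disjoint_left.1 (hf2 c d hcd) hc hd
  have case1 : ∀ a, (∀ z ∈ f a, z ∈ C) → u ∉ f a → False := by
    intro a ha hua
    have hab : a ≠ b := by
      rintro rfl
      obtain ⟨⟨z, hz⟩⟩ := (hf1 a).nonempty
      exact hb z hz (ha z hz)
    obtain ⟨p, hp⟩ : ∃ p, ∀ c, u ∈ f c → c = p := by
      by_cases hex : ∃ p, u ∈ f p
      · obtain ⟨p, hp⟩ := hex
        exact ⟨p, fun c hc => huniq u c p hc hp⟩
      · push Not at hex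
        exact ⟨a, fun c hc => absurd hc (hex c)⟩
    rcases hH.1 a b p hab with h | ⟨z, hzp, haz, hzb⟩
    · exact hua (cross a b ha hb h).1
    · have huz : u ∉ f z := fun h => hzp (hp z h)
      rcases pure z (Or.inl huz) with hz | hz
      · exact huz (cross z b hz hb hzb).1
      · exact hua (cross a z ha hz haz).1
  by_cases hua : u ∈ f a
  · obtain ⟨x, y, hxy, hax, hay⟩ := hH.2 a
    obtain ⟨w, haw, hvw⟩ : ∃ w, H.Adj a w ∧ v ∉ f w := by
      by_cases hvx : v ∈ f x
      · exact ⟨y, hay, fun hvy => hxy (huniq v x y hvx hvy)⟩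
      · exact ⟨x, hax, hvx⟩
    rcases pure w (Or.inr hvw) with hw | hw
    · exact case1 w hw fun huw => haw.ne (huniq u a w hua huw)
    · exact hvw (cross a w ha hw haw).2
  · exact case1 a ha hua

lemma IsMinor.mono (h : IsMinor H G) (hle : G ≤ G') : IsMinor H G' := by
  obtain ⟨f, hf1, hf2, hf3⟩ := h
  refine ⟨f, fun a => (hf1 a).mono (fun x y hxy => hle hxy), hf2, fun a b hab => ?_⟩
  obtain ⟨x, hx, y, hy, hxy⟩ := hf3 a b hab
  exact ⟨x, hx, y, hy, hle hxy⟩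

lemma robust_K5 : Robust (completeGraph (Fin 5)) := by
  simp only [Robust, completeGraph_eq_top, top_adj]
  decide

lemma robust_K33 : Robust (completeBipartiteGraph (Fin 3) (Fin 3)) := by
  have key : ∀ p : Fin 3, ∃ i : Fin 3, i ≠ p := by decide
  refine ⟨fun x y p hxy => ?_, fun p => ?_⟩
  · obtain ⟨i, hi⟩ : ∃ i : Fin 3, Sum.inl i ≠ p ∧ Sum.inr i ≠ p := by
      rcases p with p | p
      · obtain ⟨i, hi⟩ := key p
        exact ⟨i, by simpa using hi, by simp⟩
      · obtain ⟨i, hi⟩ := key p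
        exact ⟨i, by simp, by simpa using hi⟩
    rcases x with x | x <;> rcases y with y | y
    · exact Or.inr ⟨Sum.inr i, hi.2, by simp, by simp⟩
    · exact Or.inl (by simp)
    · exact Or.inl (by simp)
    · exact Or.inr ⟨Sum.inl i, hi.1, by simp, by simp⟩
  · rcases p with p | p
    · exact ⟨Sum.inr 0, Sum.inr 1, by simp, by simp, by simp⟩
    · exact ⟨Sum.inl 0, Sum.inl 1, by simp, by simp, by simp⟩

lemma IsPlanar.anti (h : IsPlanar G') (hle : G ≤ G') : IsPlanar G :=
  ⟨fun h' => h.1 (h'.mono hle), fun h' => h.2 (h'.mono hle)⟩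

/-- Planarity is preserved by adding an edge between two different components. -/
lemma IsPlanar.sup_edge (h : IsPlanar G) (huv : ¬ G.Reachable u v) :
    IsPlanar (G ⊔ edge u v) := by
  have key : ∀ {γ : Type} {K : SimpleGraph γ}, Robust K → IsMinor K (G ⊔ edge u v) →
      IsMinor K G := by
    intro γ K hK hm
    refine isMinor_of_bridge (C := {x | G.Reachable u x}) (u := u) (v := v) hK
      (Reachable.refl u) ?_ ?_ huv hm
    · intro x y hxy
      rw [sup_adj, edge_adj] at hxy
      tauto
    · intro x y hxy
      exact ⟨fun h => h.trans hxy.reachable, fun h => h.trans hxy.symm.reachable⟩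
  exact ⟨fun h' => h.1 (key robust_K5 h'), fun h' => h.2 (key robust_K33 h')⟩

/-- `G` has a cycle of length at most `k`. -/
def HasShortCycle (k : ℕ) (G : SimpleGraph β) : Prop :=
  ∃ (v : β) (c : G.Walk v v), c.IsCycle ∧ c.length ≤ k

lemma HasShortCycle.of_sup_edge {k : ℕ} (huv : ¬ G.Reachable u v)
    (h : HasShortCycle k (G ⊔ edge u v)) : HasShortCycle k G := by
  obtain ⟨x, c, hc, hl⟩ := h
  have hb : (G ⊔ edge u v).IsBridge s(u, v) :=
    isBridge_sup_edge.mpr (IsBridge.of_not_reachable huv)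
  have hn := hb.notMem_edges_of_isCycle hc
  have ht : ∀ e ∈ c.edges, e ∈ G.edgeSet := by
    intro e he
    have := c.edges_subset_edgeSet he
    rw [edgeSet_sup] at this
    rcases this with h | h
    · exact h
    · exact absurd (edgeSet_edge_subset h ▸ he) hn
  exact ⟨x, c.transfer G ht, hc.transfer ht, by simpa using hl⟩

end Bridge

/-! ### Adding edges between components -/

section Counting

variable {n : ℕ}

open Classical in
/-- The graphs on `Fin n` with exactly `m` edges that satisfy `P`. -/
noncomputable def graphsWith (P : SimpleGraph (Fin n) → Prop) (m : ℕ) :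
    Finset (SimpleGraph (Fin n)) :=
  Finset.univ.filter fun G => P G ∧ edgeCount G = m

lemma mem_graphsWith {P : SimpleGraph (Fin n) → Prop} {m : ℕ} {G : SimpleGraph (Fin n)} :
    G ∈ graphsWith P m ↔ P G ∧ edgeCount G = m := by
  simp [graphsWith]

lemma edgeCount_eq (G : SimpleGraph (Fin n)) [Fintype G.edgeSet] :
    edgeCount G = G.edgeFinset.card := by
  rw [edgeCount, Set.ncard_eq_toFinset_card']; rfl

/-- Joining `v` to every vertex it cannot reach makes the graph connected, so a graph with few
edges has many vertices unreachable from `v`. -/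
lemma le_card_not_reachable (G : SimpleGraph (Fin n)) (v : Fin n) :
    n ≤ edgeCount G + {w | ¬ G.Reachable v w}.ncard + 1 := by
  set U : Set (Fin n) := {w | ¬ G.Reachable v w} with hU
  set F : Set (Sym2 (Fin n)) := (fun w => s(v, w)) '' U with hF
  have hconn : (G ⊔ fromEdgeSet F).Connected := by
    rw [connected_iff_exists_forall_reachable]
    refine ⟨v, fun w => ?_⟩
    by_cases hw : G.Reachable v w
    · exact hw.mono le_sup_left
    · refine Adj.reachable (Or.inr ?_)
      rw [fromEdgeSet_adj]
      exact ⟨⟨w, hw, rfl⟩, fun h => hw (h ▸ Reachable.refl _)⟩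
  have h1 := hconn.card_vert_le_card_edgeSet_add_one
  rw [Nat.card_eq_fintype_card, Fintype.card_fin, Nat.card_coe_set_eq, edgeSet_sup] at h1
  have h2 : (G.edgeSet ∪ (fromEdgeSet F).edgeSet).ncard
      ≤ edgeCount G + (fromEdgeSet F).edgeSet.ncard := Set.ncard_union_le _ _
  have h3 : (fromEdgeSet F).edgeSet.ncard ≤ F.ncard := by
    refine Set.ncard_le_ncard ?_ (Set.toFinite _)
    rw [edgeSet_fromEdgeSet]; exact Set.sdiff_subset
  have h4 : F.ncard ≤ U.ncard := Set.ncard_image_le (Set.toFinite _)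
  omega

lemma edgeCount_sup_edge {G : SimpleGraph (Fin n)} {u v : Fin n} (h : ¬ G.Reachable u v) :
    edgeCount (G ⊔ edge u v) = edgeCount G + 1 := by
  classical
  rw [edgeCount_eq, edgeCount_eq]
  exact card_edgeFinset_sup_edge G (fun h' => h h'.reachable) (fun h' => h (h' ▸ Reachable.refl _))

open Classical in
/-- Double counting of the pairs (graph with `m` edges, ordered pair of vertices in different
components), for a class closed under adding edges between components. -/
lemma card_graphsWith_step {P : SimpleGraph (Fin n) → Prop}
    (hP : ∀ G u v, P G → ¬ G.Reachable u v → P (G ⊔ edge u v)) (m : ℕ) :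
    (graphsWith P m).card * (n * (n - (m + 1))) ≤ (graphsWith P (m + 1)).card * (2 * (m + 1)) := by
  let X := (graphsWith P m).sigma fun G =>
    (Finset.univ : Finset (Fin n × Fin n)).filter fun p => ¬ G.Reachable p.1 p.2
  let Y := (graphsWith P (m + 1)).sigma fun G =>
    (Finset.univ : Finset (Fin n × Fin n)).filter fun p => G.Adj p.1 p.2
  have hX : (graphsWith P m).card * (n * (n - (m + 1))) ≤ X.card := by
    rw [Finset.card_sigma, ← smul_eq_mul]
    refine Finset.card_nsmul_le_sum _ _ _ fun G hG => ?_
    rw [mem_graphsWith] at hG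
    rw [← Finset.univ_product_univ, Finset.card_filter, Finset.sum_product]
    simp only [← Finset.card_filter]
    have : ∀ v ∈ (Finset.univ : Finset (Fin n)), n - (m + 1) ≤
        (Finset.univ.filter fun w => ¬ G.Reachable v w).card := by
      intro v _
      have := le_card_not_reachable G v
      rw [Set.ncard_eq_toFinset_card', hG.2] at this
      simp only [Set.toFinset_ofPred] at this
      omega
    simpa using Finset.card_nsmul_le_sum _ _ _ this
  have hY : Y.card = (graphsWith P (m + 1)).card * (2 * (m + 1)) := by
    rw [Finset.card_sigma, ← smul_eq_mul]
    refine Finset.sum_eq_card_nsmul fun G hG => ?_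
    rw [mem_graphsWith, edgeCount_eq] at hG
    rw [← hG.2, ← sum_degrees_eq_twice_card_edges, ← Finset.univ_product_univ,
      Finset.card_filter, Finset.sum_product]
    simp only [← Finset.card_filter]
    refine Finset.sum_congr rfl fun v _ => ?_
    rw [← card_neighborFinset_eq_degree, neighborFinset_eq_filter]
  have hXY : X.card ≤ Y.card := by
    refine Finset.card_le_card_of_injOn
      (fun x => (⟨x.1 ⊔ edge x.2.1 x.2.2, x.2⟩ : Σ _ : SimpleGraph (Fin n), Fin n × Fin n)) ?_ ?_
    · rintro ⟨G, u, v⟩ hx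
      simp only [X, Y, Finset.coe_sigma, Set.mem_sigma_iff, Finset.mem_coe, mem_graphsWith,
        Finset.mem_filter, Finset.mem_univ, true_and] at hx ⊢
      refine ⟨⟨hP G u v hx.1.1 hx.2, by rw [edgeCount_sup_edge hx.2, hx.1.2]⟩, Or.inr ?_⟩
      rw [edge_adj]
      exact ⟨Or.inl ⟨rfl, rfl⟩, fun h => hx.2 (h ▸ Reachable.refl _)⟩
    · rintro ⟨G, u, v⟩ hx ⟨G', u', v'⟩ hx' heq
      simp only [X, Finset.coe_sigma, Set.mem_sigma_iff, Finset.mem_coe,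
        Finset.mem_filter, Finset.mem_univ, true_and] at hx hx'
      simp only [Sigma.mk.injEq, heq_eq_eq, Prod.mk.injEq] at heq
      obtain ⟨h, rfl, rfl⟩ := heq
      have e1 : (G ⊔ edge u v) \ edge u v = G := by
        rw [sup_sdiff_right_self, sdiff_edge]
        exact fun h => hx.2 h.reachable
      have e2 : (G' ⊔ edge u v) \ edge u v = G' := by
        rw [sup_sdiff_right_self, sdiff_edge]
        exact fun h => hx'.2 h.reachable
      have : G = G' := by rw [← e1, ← e2, h]
      rw [this]
  exact hX.trans (hXY.trans hY.le)

/-- With at most `A n` edges in total, each edge removed costs a factor of order `n` in the size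
of the class. -/
lemma card_graphsWith_iter {P : SimpleGraph (Fin n) → Prop}
    (hP : ∀ G u v, P G → ¬ G.Reachable u v → P (G ⊔ edge u v)) {A : ℝ} (hA : A < 1)
    (hn : 0 < n) (j : ℕ) : ∀ m : ℕ, (m + j : ℕ) ≤ A * n →
    (n : ℝ) ^ j * (graphsWith P m).card ≤ (2 / (1 - A)) ^ j * (graphsWith P (m + j)).card := by
  have hn' : (0 : ℝ) < n := by exact_mod_cast hn
  have hA' : 0 < 1 - A := by linarith
  have step : ∀ m : ℕ, (m + 1 : ℕ) ≤ A * n →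
      (n : ℝ) * (graphsWith P m).card ≤ 2 / (1 - A) * (graphsWith P (m + 1)).card := by
    intro m hm
    have h := card_graphsWith_step hP m
    have hle : m + 1 ≤ n := by
      have : ((m + 1 : ℕ) : ℝ) ≤ n := by nlinarith
      exact_mod_cast this
    have h' : ((graphsWith P m).card : ℝ) * (n * (n - ((m + 1 : ℕ) : ℝ)))
        ≤ (graphsWith P (m + 1)).card * (2 * ((m + 1 : ℕ) : ℝ)) := by
      rw [← Nat.cast_sub hle]
      exact_mod_cast h
    have h1 : (1 - A) * n ≤ n - ((m + 1 : ℕ) : ℝ) := by linarith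
    have h2 : ((m + 1 : ℕ) : ℝ) ≤ n := by exact_mod_cast hle
    rw [div_mul_eq_mul_div, le_div_iff₀ hA']
    have hx : (0 : ℝ) ≤ (graphsWith P m).card := Nat.cast_nonneg _
    have hy : (0 : ℝ) ≤ (graphsWith P (m + 1)).card := Nat.cast_nonneg _
    have h3 : ((graphsWith P m).card : ℝ) * (n * ((1 - A) * n))
        ≤ (graphsWith P (m + 1)).card * (2 * n) := by
      refine le_trans (by gcongr) (h'.trans (by gcongr))
    refine le_of_mul_le_mul_right ?_ hn'
    nlinarith
  induction j with
  | zero => intro m _; simp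
  | succ j ih =>
    intro m hm
    have h1 := ih (m + 1) (by rwa [show m + 1 + j = m + (j + 1) by ring])
    have h2 := step m (le_trans (by push_cast; linarith [(Nat.cast_nonneg j : (0 : ℝ) ≤ j)]) hm)
    rw [show m + 1 + j = m + (j + 1) by ring] at h1
    calc (n : ℝ) ^ (j + 1) * (graphsWith P m).card
        = n ^ j * (n * (graphsWith P m).card) := by ring
      _ ≤ n ^ j * (2 / (1 - A) * (graphsWith P (m + 1)).card) := by gcongr
      _ = 2 / (1 - A) * (n ^ j * (graphsWith P (m + 1)).card) := by ring
      _ ≤ 2 / (1 - A) * ((2 / (1 - A)) ^ j * (graphsWith P (m + (j + 1))).card) := by gcongr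
      _ = _ := by ring

/-- If deleting a fixed edge set `S` maps the class `P` into `Q`, then the injection
`G ↦ G - S` bounds the number of graphs in `P` with `m` edges by the number of graphs in `Q` with
`m - |S|` edges, which is smaller by a factor of order `n ^ |S|` than the number with `m` edges. -/
lemma card_containing {P Q : SimpleGraph (Fin n) → Prop}
    (hQ : ∀ G u v, Q G → ¬ G.Reachable u v → Q (G ⊔ edge u v)) {A : ℝ} (hA : A < 1)
    (hn : 0 < n) {m : ℕ} (hm : (m : ℝ) ≤ A * n) (S : Finset (Sym2 (Fin n)))
    (hPS : ∀ G, P G → (S : Set (Sym2 (Fin n))) ⊆ G.edgeSet)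
    (hPQ : ∀ G, P G → Q (G.deleteEdges S)) :
    (n : ℝ) ^ S.card * (graphsWith P m).card ≤
      (2 / (1 - A)) ^ S.card * (graphsWith Q m).card := by
  have hA' : 0 < 1 - A := by linarith
  have hcount : ∀ G, P G → edgeCount (G.deleteEdges S) + S.card = edgeCount G := by
    intro G hG
    rw [edgeCount, edgeCount, edgeSet_deleteEdges, ← Set.ncard_coe_finset S]
    exact Set.ncard_sdiff_add_ncard_of_subset (hPS G hG) (Set.toFinite _)
  rcases (graphsWith P m).eq_empty_or_nonempty with h0 | ⟨G₀, hG₀⟩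
  · rw [h0]; simp; positivity
  rw [mem_graphsWith] at hG₀
  obtain ⟨l, rfl⟩ : ∃ l, m = l + S.card := ⟨_, by rw [hcount G₀ hG₀.1, hG₀.2]⟩
  refine le_trans ?_ (card_graphsWith_iter hQ hA hn S.card l hm)
  refine mul_le_mul_of_nonneg_left (Nat.cast_le.2 ?_) (by positivity)
  refine Finset.card_le_card_of_injOn (fun G : SimpleGraph (Fin n) => G.deleteEdges S) ?_ ?_
  · intro G hG
    rw [Finset.mem_coe, mem_graphsWith] at hG ⊢
    have := hcount G hG.1
    exact ⟨hPQ G hG.1, by dsimp only; omega⟩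
  · intro G hG G' hG' h
    rw [Finset.mem_coe, mem_graphsWith] at hG hG'
    have h1 : G.edgeSet \ S = G'.edgeSet \ S := by
      rw [← edgeSet_deleteEdges, ← edgeSet_deleteEdges]
      exact congrArg edgeSet h
    rw [← edgeSet_inj, ← Set.sdiff_union_of_subset (hPS G hG.1),
      ← Set.sdiff_union_of_subset (hPS G' hG'.1), h1]

end Counting

/-! ### Edges lying on short cycles -/

section ShortCycles

variable {n : ℕ}

open Classical in
/-- The edge sets with `r` edges that touch at most `r` vertices. -/
noncomputable def denseSets (n r : ℕ) : Finset (Finset (Sym2 (Fin n))) :=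
  Finset.univ.filter fun S => S.card = r ∧ (Finset.univ.filter fun v => ∃ e ∈ S, v ∈ e).card ≤ r

lemma card_denseSets_le (hn : 0 < n) (r : ℕ) :
    (denseSets n r).card ≤ n ^ r * 2 ^ (r * r) := by
  classical
  have hcard : (Finset.univ : Finset ((Fin r → Fin n) × Finset (Fin r × Fin r))).card
      = n ^ r * 2 ^ (r * r) := by
    simp [Fintype.card_prod]
  rw [← hcard]
  refine Finset.card_le_card_of_surjOn
    (fun x => x.2.image fun p => s(x.1 p.1, x.1 p.2)) ?_
  intro S hS
  simp only [denseSets, Finset.coe_filter, Finset.mem_univ, true_and] at hS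
  obtain ⟨-, hW⟩ := hS
  set W : Finset (Fin n) := Finset.univ.filter fun v => ∃ e ∈ S, v ∈ e with hWdef
  obtain ⟨g, hg⟩ : ∃ g : Fin r → Fin n, ∀ v ∈ W, ∃ i, g i = v := by
    refine ⟨fun i => W.toList.getD i ⟨0, hn⟩, fun v hv => ?_⟩
    obtain ⟨i, hi, hiv⟩ := List.mem_iff_getElem.1 (Finset.mem_toList.2 hv)
    rw [Finset.length_toList] at hi
    refine ⟨⟨i, hi.trans_le hW⟩, ?_⟩
    simp only
    rw [List.getD_eq_getElem _ _ (by rwa [Finset.length_toList]), hiv]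
  refine ⟨(g, Finset.univ.filter fun p => s(g p.1, g p.2) ∈ S), Finset.mem_coe.2 (Finset.mem_univ _),
    ?_⟩
  ext e
  simp only [Finset.mem_image, Finset.mem_filter, Finset.mem_univ, true_and, Prod.exists]
  constructor
  · rintro ⟨i, j, h, rfl⟩
    exact h
  · intro he
    induction e with
    | h a b =>
      obtain ⟨i, rfl⟩ := hg a (by simp only [hWdef, Finset.mem_filter, Finset.mem_univ, true_and]
                                  exact ⟨_, he, Sym2.mem_mk_left _ _⟩)
      obtain ⟨j, rfl⟩ := hg b (by simp only [hWdef, Finset.mem_filter, Finset.mem_univ, true_and]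
                                  exact ⟨_, he, Sym2.mem_mk_right _ _⟩)
      exact ⟨i, j, he, rfl⟩

/-- By the handshake count, an edge set in which every touched vertex has degree at least two
touches at most as many vertices as it has edges. -/
lemma mem_denseSets {S : Finset (Sym2 (Fin n))}
    (h : ∀ e ∈ S, ∀ v ∈ e, ∃ e' ∈ S, e' ≠ e ∧ v ∈ e') : S ∈ denseSets n S.card := by
  classical
  simp only [denseSets, Finset.mem_filter, Finset.mem_univ, true_and]
  set W : Finset (Fin n) := Finset.univ.filter fun v => ∃ e ∈ S, v ∈ e with hWdef
  have key : W.card * 2 ≤ S.card * 2 := by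
    refine Finset.card_mul_le_card_mul (fun (v : Fin n) (e : Sym2 (Fin n)) => v ∈ e) ?_ ?_
    · intro v hv
      simp only [hWdef, Finset.mem_filter, Finset.mem_univ, true_and] at hv
      obtain ⟨e, he, hve⟩ := hv
      obtain ⟨e', he', hne, hve'⟩ := h e he v hve
      exact Finset.one_lt_card.2 ⟨e, by simp [Finset.mem_bipartiteAbove, he, hve], e',
        by simp [Finset.mem_bipartiteAbove, he', hve'], hne.symm⟩
    · intro e _
      induction e with
      | h a b =>
        refine (Finset.card_le_card (t := {a, b}) ?_).trans Finset.card_le_two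
        intro v hv
        simpa using ((Finset.mem_bipartiteBelow _).1 hv).2
  omega

/-- Every vertex of a cycle lies on a second edge of the cycle. -/
lemma IsCycle.exists_other_edge {V : Type*} {G : SimpleGraph V} {x : V} {c : G.Walk x x}
    (hc : c.IsCycle) {e : Sym2 V} (he : e ∈ c.edges) {v : V} (hv : v ∈ e) :
    ∃ e' ∈ c.edges, e' ≠ e ∧ v ∈ e' := by
  obtain ⟨w, rfl⟩ := Sym2.mem_iff_exists.1 hv
  have h2 := hc.ncard_neighborSet_toSubgraph_eq_two (c.fst_mem_support_of_mem_edges he)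
  obtain ⟨w', hw', hne⟩ := Set.exists_ne_of_one_lt_ncard (by rw [h2]; norm_num) w
  rw [Subgraph.mem_neighborSet, Walk.adj_toSubgraph_iff_mem_edges] at hw'
  refine ⟨s(v, w'), hw', fun h => hne ?_, Sym2.mem_mk_left _ _⟩
  exact Sym2.congr_right.1 h

open Classical in
/-- The edges of `G` that lie on a cycle of length at most `k`. -/
noncomputable def shortEdges (k : ℕ) (G : SimpleGraph (Fin n)) : Finset (Sym2 (Fin n)) :=
  Finset.univ.filter fun e => ∃ (v : Fin n) (c : G.Walk v v),
    c.IsCycle ∧ c.length ≤ k ∧ e ∈ c.edges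

lemma mem_shortEdges {k : ℕ} {G : SimpleGraph (Fin n)} {e : Sym2 (Fin n)} :
    e ∈ shortEdges k G ↔ ∃ (v : Fin n) (c : G.Walk v v),
      c.IsCycle ∧ c.length ≤ k ∧ e ∈ c.edges := by
  simp [shortEdges]

lemma shortEdges_subset (k : ℕ) (G : SimpleGraph (Fin n)) :
    (shortEdges k G : Set (Sym2 (Fin n))) ⊆ G.edgeSet := by
  intro e he
  obtain ⟨v, c, -, -, h⟩ := mem_shortEdges.1 he
  exact c.edges_subset_edgeSet h

lemma not_hasShortCycle_delete (k : ℕ) (G : SimpleGraph (Fin n)) :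
    ¬ HasShortCycle k (G.deleteEdges (shortEdges k G)) := by
  rintro ⟨v, c, hc, hl⟩
  have hle : G.deleteEdges (shortEdges k G) ≤ G := deleteEdges_le _
  obtain ⟨e, he⟩ : ∃ e, e ∈ c.edges := by
    refine List.exists_mem_of_ne_nil _ fun h => ?_
    have := c.length_edges
    rw [h, List.length_nil] at this
    have := hc.three_le_length
    omega
  have h1 := c.edges_subset_edgeSet he
  rw [edgeSet_deleteEdges] at h1
  refine h1.2 (Finset.mem_coe.2 (mem_shortEdges.2 ⟨v, c.mapLe hle, hc.mapLe hle, ?_, ?_⟩))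
  · simpa using hl
  · simpa using he

lemma shortEdges_mem_denseSets (k : ℕ) (G : SimpleGraph (Fin n)) :
    shortEdges k G ∈ denseSets n (shortEdges k G).card := by
  refine mem_denseSets fun e he v hv => ?_
  obtain ⟨x, c, hc, hl, hec⟩ := mem_shortEdges.1 he
  obtain ⟨e', he', hne, hv'⟩ := IsCycle.exists_other_edge hc hec hv
  exact ⟨e', mem_shortEdges.2 ⟨x, c, hc, hl, he'⟩, hne, hv'⟩

open Classical in
lemma card_shortEdges_le (k : ℕ) (G : SimpleGraph (Fin n)) :
    (shortEdges k G).card ≤ ∑ r ∈ Finset.range (k + 1), ∑ S ∈ denseSets n r,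
      if (S : Set (Sym2 (Fin n))) ⊆ G.edgeSet then r else 0 := by
  have hsub : shortEdges k G ⊆ (Finset.range (k + 1)).biUnion fun r =>
      ((denseSets n r).filter fun S : Finset (Sym2 (Fin n)) => (S : Set (Sym2 (Fin n))) ⊆ G.edgeSet).biUnion id := by
    intro e he
    obtain ⟨x, c, hc, hl, hec⟩ := mem_shortEdges.1 he
    have hcard : c.edges.toFinset.card = c.length := by
      rw [List.toFinset_card_of_nodup hc.edges_nodup, Walk.length_edges]
    have hd : c.edges.toFinset ∈ denseSets n c.length := by
      rw [← hcard]
      refine mem_denseSets fun e he v hv => ?_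
      obtain ⟨e', he', hne, hv'⟩ := IsCycle.exists_other_edge hc (List.mem_toFinset.1 he) hv
      exact ⟨e', List.mem_toFinset.2 he', hne, hv'⟩
    rw [Finset.mem_biUnion]
    refine ⟨c.length, Finset.mem_range.2 (by omega), ?_⟩
    rw [Finset.mem_biUnion]
    refine ⟨c.edges.toFinset, Finset.mem_filter.2 ⟨hd, fun e' he' => ?_⟩, List.mem_toFinset.2 hec⟩
    exact c.edges_subset_edgeSet (List.mem_toFinset.1 (Finset.mem_coe.1 he'))
  refine (Finset.card_le_card hsub).trans (Finset.card_biUnion_le.trans ?_)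
  refine Finset.sum_le_sum fun r _ => Finset.card_biUnion_le.trans ?_
  rw [← Finset.sum_filter]
  refine Finset.sum_le_sum fun S hS => ?_
  have := (Finset.mem_filter.1 (Finset.mem_filter.1 hS).1).2.1
  exact this.le

end ShortCycles

/-! ### Expected number of short-cycle edges and conclusion -/

section Conclusion

variable {n : ℕ}

/-- The expected number of edges on short cycles is bounded: an edge set in `denseSets n r` is
contained in the random graph with probability `O(n ^ (-r))`, and there are `O(n ^ r)` of them. -/
lemma sum_card_shortEdges_le (k : ℕ) {A : ℝ} (hA : A < 1) (hn : 0 < n) {m : ℕ}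
    (hm : (m : ℝ) ≤ A * n) :
    ∑ G ∈ graphsWith (n := n) IsPlanar m, ((shortEdges k G).card : ℝ) ≤
      (∑ r ∈ Finset.range (k + 1), (r : ℝ) * 2 ^ (r * r) * (2 / (1 - A)) ^ r) *
        (graphsWith (n := n) IsPlanar m).card := by
  classical
  have hn' : (0 : ℝ) < n := by exact_mod_cast hn
  have hA' : 0 < 1 - A := by linarith
  set N : ℝ := ((graphsWith (n := n) IsPlanar m).card : ℝ) with hN
  have hS : ∀ r, ∀ S ∈ denseSets n r,
      (((graphsWith (n := n) IsPlanar m).filter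
        fun G => (S : Set (Sym2 (Fin n))) ⊆ G.edgeSet).card : ℝ) ≤
        (2 / (1 - A)) ^ r * N / n ^ r := by
    intro r S hS
    have hr : S.card = r := (Finset.mem_filter.1 hS).2.1
    have h := card_containing
      (P := fun G => IsPlanar G ∧ (S : Set (Sym2 (Fin n))) ⊆ G.edgeSet) (Q := IsPlanar)
      (fun G u v h huv => h.sup_edge huv) hA hn hm S (fun G h => h.2)
      (fun G h => h.1.anti (deleteEdges_le _))
    rw [hr] at h
    have he : (graphsWith (n := n) IsPlanar m).filter
        (fun G => (S : Set (Sym2 (Fin n))) ⊆ G.edgeSet) =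
        graphsWith (fun G => IsPlanar G ∧ (S : Set (Sym2 (Fin n))) ⊆ G.edgeSet) m := by
      ext G
      simp only [Finset.mem_filter, mem_graphsWith]
      tauto
    rw [he, le_div_iff₀ (by positivity), mul_comm]
    exact h
  calc ∑ G ∈ graphsWith (n := n) IsPlanar m, ((shortEdges k G).card : ℝ)
      ≤ ∑ G ∈ graphsWith (n := n) IsPlanar m, ∑ r ∈ Finset.range (k + 1), ∑ S ∈ denseSets n r,
          (if (S : Set (Sym2 (Fin n))) ⊆ G.edgeSet then (r : ℝ) else 0) := by
        refine Finset.sum_le_sum fun G _ => ?_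
        have := card_shortEdges_le k G
        calc ((shortEdges k G).card : ℝ) ≤ ((∑ r ∈ Finset.range (k + 1), ∑ S ∈ denseSets n r,
              if (S : Set (Sym2 (Fin n))) ⊆ G.edgeSet then r else 0 : ℕ) : ℝ) := by
              exact_mod_cast this
          _ = _ := by push_cast; rfl
    _ = ∑ r ∈ Finset.range (k + 1), ∑ S ∈ denseSets n r, (r : ℝ) *
          ((graphsWith (n := n) IsPlanar m).filter
            fun G => (S : Set (Sym2 (Fin n))) ⊆ G.edgeSet).card := by
        rw [Finset.sum_comm]
        refine Finset.sum_congr rfl fun r _ => ?_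
        rw [Finset.sum_comm]
        refine Finset.sum_congr rfl fun S _ => ?_
        rw [← Finset.sum_filter, Finset.sum_const, nsmul_eq_mul, mul_comm]
    _ ≤ ∑ r ∈ Finset.range (k + 1), (n ^ r * 2 ^ (r * r)) *
          ((r : ℝ) * ((2 / (1 - A)) ^ r * N / n ^ r)) := by
        refine Finset.sum_le_sum fun r _ => ?_
        have h1 : ((denseSets n r).card : ℝ) ≤ n ^ r * 2 ^ (r * r) := by
          exact_mod_cast card_denseSets_le hn r
        refine (Finset.sum_le_card_nsmul _ _ _ fun S hSr =>
          mul_le_mul_of_nonneg_left (hS r S hSr) (Nat.cast_nonneg r)).trans ?_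
        rw [nsmul_eq_mul]
        gcongr
    _ = _ := by
        rw [Finset.sum_mul]
        refine Finset.sum_congr rfl fun r _ => ?_
        field_simp

/-- Graphs with at most `T` edges on short cycles are, up to a constant factor, no more numerous
than graphs without short cycles. -/
lemma card_few_shortEdges_le (k T : ℕ) {A : ℝ} (hA : A < 1) (hn : 0 < n) {m : ℕ}
    (hm : (m : ℝ) ≤ A * n) :
    ((graphsWith (fun G : SimpleGraph (Fin n) =>
        IsPlanar G ∧ (shortEdges k G).card ≤ T) m).card : ℝ) ≤
      (∑ r ∈ Finset.range (T + 1), (2 : ℝ) ^ (r * r) * (2 / (1 - A)) ^ r) *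
        (graphsWith (fun G : SimpleGraph (Fin n) => IsPlanar G ∧ ¬ HasShortCycle k G) m).card := by
  classical
  have hn' : (0 : ℝ) < n := by exact_mod_cast hn
  have hA' : 0 < 1 - A := by linarith
  set F : ℝ := ((graphsWith (fun G : SimpleGraph (Fin n) =>
    IsPlanar G ∧ ¬ HasShortCycle k G) m).card : ℝ) with hF
  have hS : ∀ r, ∀ S ∈ denseSets n r,
      ((graphsWith (fun G : SimpleGraph (Fin n) =>
        IsPlanar G ∧ shortEdges k G = S) m).card : ℝ) ≤ (2 / (1 - A)) ^ r * F / n ^ r := by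
    intro r S hS
    have hr : S.card = r := (Finset.mem_filter.1 hS).2.1
    have h := card_containing
      (P := fun G : SimpleGraph (Fin n) => IsPlanar G ∧ shortEdges k G = S)
      (Q := fun G : SimpleGraph (Fin n) => IsPlanar G ∧ ¬ HasShortCycle k G)
      (fun G u v h huv => ⟨h.1.sup_edge huv, fun h' => h.2 (h'.of_sup_edge huv)⟩) hA hn hm S
      (fun G h => h.2 ▸ shortEdges_subset k G)
      (fun G h => ⟨h.1.anti (deleteEdges_le _), h.2 ▸ not_hasShortCycle_delete k G⟩)
    rw [hr] at h
    rw [le_div_iff₀ (by positivity), mul_comm]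
    exact h
  have hsub : graphsWith (fun G : SimpleGraph (Fin n) =>
      IsPlanar G ∧ (shortEdges k G).card ≤ T) m ⊆
      (Finset.range (T + 1)).biUnion fun r => (denseSets n r).biUnion fun S =>
        graphsWith (fun G : SimpleGraph (Fin n) => IsPlanar G ∧ shortEdges k G = S) m := by
    intro G hG
    rw [mem_graphsWith] at hG
    simp only [Finset.mem_biUnion, mem_graphsWith]
    exact ⟨_, Finset.mem_range.2 (by omega), _, shortEdges_mem_denseSets k G, ⟨hG.1.1, rfl⟩, hG.2⟩
  have hnat := (Finset.card_le_card hsub).trans (Finset.card_biUnion_le.trans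
    (Finset.sum_le_sum fun r _ => Finset.card_biUnion_le))
  calc _ ≤ ∑ r ∈ Finset.range (T + 1), ∑ S ∈ denseSets n r,
          ((graphsWith (fun G : SimpleGraph (Fin n) =>
            IsPlanar G ∧ shortEdges k G = S) m).card : ℝ) := by exact_mod_cast hnat
    _ ≤ ∑ r ∈ Finset.range (T + 1), (n ^ r * 2 ^ (r * r)) *
          ((2 / (1 - A)) ^ r * F / n ^ r) := by
        refine Finset.sum_le_sum fun r _ => ?_
        have h1 : ((denseSets n r).card : ℝ) ≤ n ^ r * 2 ^ (r * r) := by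
          exact_mod_cast card_denseSets_le hn r
        refine (Finset.sum_le_card_nsmul _ _ _ fun S hSr => hS r S hSr).trans ?_
        rw [nsmul_eq_mul]
        gcongr
    _ = _ := by
        rw [Finset.sum_mul]
        refine Finset.sum_congr rfl fun r _ => ?_
        field_simp

/-- A positive proportion, uniform in `n` and `m`, of the planar graphs has no short cycle. -/
lemma exists_card_le (k : ℕ) {A : ℝ} (hA : A < 1) :
    ∃ L : ℝ, 1 ≤ L ∧ ∀ n : ℕ, 0 < n → ∀ m : ℕ, (m : ℝ) ≤ A * n →
      ((graphsWith (n := n) IsPlanar m).card : ℝ) ≤ L *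
        (graphsWith (fun G : SimpleGraph (Fin n) => IsPlanar G ∧ ¬ HasShortCycle k G) m).card := by
  classical
  have hA' : 0 < 1 - A := by linarith
  set K : ℝ := ∑ r ∈ Finset.range (k + 1), (r : ℝ) * 2 ^ (r * r) * (2 / (1 - A)) ^ r with hK
  have hK0 : 0 ≤ K := Finset.sum_nonneg fun r _ => by positivity
  obtain ⟨T, hT⟩ := exists_nat_ge (2 * K)
  set L : ℝ := ∑ r ∈ Finset.range (T + 1), (2 : ℝ) ^ (r * r) * (2 / (1 - A)) ^ r with hL
  have hL1 : 1 ≤ L := by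
    have := Finset.single_le_sum (f := fun r => (2 : ℝ) ^ (r * r) * (2 / (1 - A)) ^ r)
      (s := Finset.range (T + 1)) (fun r _ => by positivity) (Finset.mem_range.2 (Nat.succ_pos T))
    simpa using this
  refine ⟨2 * L, by linarith, fun n hn m hm => ?_⟩
  have h1 := sum_card_shortEdges_le (n := n) k hA hn hm
  have h2 := card_few_shortEdges_le (n := n) k T hA hn hm
  set N := graphsWith (n := n) IsPlanar m with hN
  set few := graphsWith (fun G : SimpleGraph (Fin n) =>
        IsPlanar G ∧ (shortEdges k G).card ≤ T) m with hfew
  have hfew' : N.filter (fun G => (shortEdges k G).card ≤ T) = few := by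
    ext G
    simp only [hN, hfew, Finset.mem_filter, mem_graphsWith]
    tauto
  have hsplit := Finset.card_filter_add_card_filter_not (s := N)
    (fun G => (shortEdges k G).card ≤ T)
  rw [hfew'] at hsplit
  -- Markov's inequality; the `+ 1` keeps the threshold positive
  have hmarkov : ((N.filter fun G => ¬ (shortEdges k G).card ≤ T).card : ℝ) * (T + 1)
      ≤ K * N.card := by
    refine le_trans ?_ h1
    rw [← nsmul_eq_mul]
    refine (Finset.card_nsmul_le_sum _ _ _ fun G hG => ?_).trans
      (Finset.sum_le_sum_of_subset_of_nonneg (Finset.filter_subset _ _)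
        fun _ _ _ => Nat.cast_nonneg _)
    have := (Finset.mem_filter.1 hG).2
    push Not at this
    exact_mod_cast this
  have hsplit' : (few.card : ℝ) + (N.filter fun G => ¬ (shortEdges k G).card ≤ T).card = N.card := by
    exact_mod_cast hsplit
  set B : ℝ := ((N.filter fun G => ¬ (shortEdges k G).card ≤ T).card : ℝ) with hB
  have hB2 : 2 * B ≤ N.card := by
    have hT1 : (0 : ℝ) < T + 1 := by positivity
    refine le_of_mul_le_mul_right ?_ hT1
    have : (0 : ℝ) ≤ N.card := Nat.cast_nonneg _
    nlinarith
  linarith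

end Conclusion

theorem short_cycle_not_whp (k : ℕ) (hk : 0 < k) (A : ℝ) (hA : A < 1) (m : ℕ → ℕ)
    (hm : ∀ n : ℕ, (m n : ℝ) ≤ A * (n : ℝ)) :
    limsup (fun n : ℕ =>
        planarProb n (m n) fun G =>
          ∃ (v : Fin n) (c : G.Walk v v), c.IsCycle ∧ c.length ≤ k)
      atTop < 1 := by
  classical
  obtain ⟨L, hL1, hL⟩ := exists_card_le k hA
  have hL0 : 0 < L := by linarith
  have hbound : ∀ n : ℕ, 0 < n → planarProb n (m n) (HasShortCycle k) ≤ 1 - 1 / L := by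
    intro n hn
    have h := hL n hn (m n) (hm n)
    have e1 : planarSet n (m n) = (graphsWith (n := n) IsPlanar (m n) : Set _) := by
      ext G; simp [planarSet, mem_graphsWith]
    have e2 : {G ∈ planarSet n (m n) | HasShortCycle k G} =
        ((graphsWith (n := n) IsPlanar (m n)).filter (HasShortCycle k) : Set _) := by
      ext G; simp [planarSet, mem_graphsWith]
    have e3 : graphsWith (fun G : SimpleGraph (Fin n) => IsPlanar G ∧ ¬ HasShortCycle k G) (m n) =
        (graphsWith (n := n) IsPlanar (m n)).filter (fun G => ¬ HasShortCycle k G) := by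
      ext G
      simp only [Finset.mem_filter, mem_graphsWith]
      tauto
    rw [planarProb, e2, e1, Set.ncard_coe_finset, Set.ncard_coe_finset]
    rw [e3] at h
    set N := graphsWith (n := n) IsPlanar (m n) with hN
    have hsplit : ((N.filter (HasShortCycle k)).card : ℝ) +
        (N.filter fun G => ¬ HasShortCycle k G).card = N.card := by
      exact_mod_cast Finset.card_filter_add_card_filter_not (s := N) (HasShortCycle k)
    rcases N.card.eq_zero_or_pos with h0 | hpos
    · rw [h0]
      have : 1 / L ≤ 1 := by rw [div_le_one hL0]; exact hL1
      simp only [Nat.cast_zero, div_zero]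
      linarith
    · have hpos' : (0 : ℝ) < N.card := by exact_mod_cast hpos
      rw [div_le_iff₀ hpos']
      have : (N.card : ℝ) / L ≤ (N.filter fun G => ¬ HasShortCycle k G).card := by
        rw [div_le_iff₀ hL0, mul_comm]; exact h
      have e : (1 - 1 / L) * (N.card : ℝ) = N.card - N.card / L := by ring
      rw [e]
      linarith
  have hlim : limsup (fun n : ℕ => planarProb n (m n) (HasShortCycle k)) atTop ≤ 1 - 1 / L := by
    refine limsup_le_of_le ?_ ?_
    · refine isCoboundedUnder_le_of_le atTop (x := 0) fun n => ?_
      exact div_nonneg (Nat.cast_nonneg _) (Nat.cast_nonneg _)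
    · filter_upwards [eventually_gt_atTop 0] with n hn using hbound n hn
  refine lt_of_le_of_lt hlim ?_
  have : 0 < 1 / L := by positivity
  linarith
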